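/- arXiv:math/0409586 — 4 statements merged into one kernel-verified Lean document; each statement's English description precedes it below -/
import Mathlib

section
/- Strong Jordan separation, separation part: Let f : S¹ → S² be a continuous map, and let I(f) = {p ∈ S¹ : f⁻¹({f(p)}) = {p}} be its set of injective points. If I(f) contains a nonempty open subset of S¹, then the complement S² \ f(S¹) is not connected (i.e. f(S¹) separates S² into at least two connected components). -/
open Metric Set

noncomputable section

/-- The unit circle in the Euclidean plane. -/
def circleS : Set (EuclideanSpace ℝ (Fin 2)) := Metric.sphere 0 1

/-- The unit sphere in Euclidean 3-space. -/
def sphereS : Set (EuclideanSpace ℝ (Fin 3)) := Metric.sphere 0 1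

/-- The set of injective points of `f : S¹ → S²`: points `p` of the circle such that the only
point of the circle mapping to `f p` is `p` itself. -/
def injPts (f : EuclideanSpace ℝ (Fin 2) → EuclideanSpace ℝ (Fin 3)) :
    Set (EuclideanSpace ℝ (Fin 2)) :=
  {p | p ∈ circleS ∧ ∀ q ∈ circleS, f q = f p → q = p}

/-!
Cut `S¹` at the ends of an arc of injective points: the two pieces are mapped to paths `γ₁`, `γ₂`
from a point `a` to a point `b ≠ a`, and their ranges meet only in `a` and `b`. Identify `S²` with
`ℂ ∪ {∞}` so that `a` becomes `∞` and `b` a complex number `w`. If a path `γ` from `∞` to `w` misses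
`q`, then `1 - (z - q) / (γ t - q)` is a homotopy through nowhere vanishing functions of `z ∉ γ`
from the constant `1` to a multiple of `z - w`, so `z - w` has a continuous logarithm off `γ`. If
the complement of `γ₁ ∪ γ₂` were connected, the logarithms off `γ₁` and off `γ₂` would differ by a
constant and glue to a logarithm of `z - w` on `ℂ \ {w}`, which does not exist. A common missed
point `q` exists since the connected set `ℂ \ {w}` is not the union of two disjoint nonempty
relatively closed sets.
-/

open Complex Function Topology unitInterval
open scoped OnePoint Real

/-- `HasLogOn g s` says that `g : X → ℂ` has a continuous branch of logarithm on `s`; in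
particular `g` has no zero there. -/
def HasLogOn {X : Type*} [TopologicalSpace X] (g : X → ℂ) (s : Set X) : Prop :=
  ∃ L : X → ℂ, ContinuousOn L s ∧ ∀ x ∈ s, exp (L x) = g x

namespace HasLogOn

variable {X : Type*} [TopologicalSpace X] {g h : X → ℂ} {s t : Set X}

theorem const {c : ℂ} (hc : c ≠ 0) (s : Set X) : HasLogOn (fun _ => c) s :=
  ⟨fun _ => log c, continuousOn_const, fun _ _ => exp_log hc⟩

theorem mul (hg : HasLogOn g s) (hh : HasLogOn h s) : HasLogOn (fun x => g x * h x) s := by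
  obtain ⟨L, hL, hLg⟩ := hg
  obtain ⟨M, hM, hMh⟩ := hh
  exact ⟨fun x => L x + M x, hL.add hM, fun x hx => by rw [exp_add, hLg x hx, hMh x hx]⟩

theorem congr (hg : HasLogOn g s) (hgh : EqOn g h s) : HasLogOn h s := by
  obtain ⟨L, hL, hLg⟩ := hg
  exact ⟨L, hL, fun x hx => (hLg x hx).trans (hgh hx)⟩

theorem mono (hg : HasLogOn g t) (hst : s ⊆ t) : HasLogOn g s := by
  obtain ⟨L, hL, hLg⟩ := hg
  exact ⟨L, hL.mono hst, fun x hx => hLg x (hst hx)⟩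

theorem of_domRestrict (hg : HasLogOn (fun x : s => g x) univ) : HasLogOn g s := by
  classical
  obtain ⟨L, hL, hLg⟩ := hg
  let M : X → ℂ := fun x => if hx : x ∈ s then L ⟨x, hx⟩ else 0
  have hM : s.domRestrict M = L := funext fun x => dif_pos x.2
  refine ⟨M, ?_, fun x hx => ?_⟩
  · rw [continuousOn_iff_continuous_domRestrict, hM]
    exact continuousOn_univ.1 hL
  · exact (congrArg exp (congrFun hM ⟨x, hx⟩)).trans (hLg ⟨x, hx⟩ trivial)

theorem of_homotopy_univ {H : I × X → ℂ} (hH : Continuous H) (hne : ∀ p, H p ≠ 0)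
    (h₀ : HasLogOn (fun x => H (0, x)) univ) : HasLogOn (fun x => H (1, x)) univ := by
  obtain ⟨L, hL, hLH⟩ := h₀
  let H' : C(I × X, {z : ℂ // z ≠ 0}) := ⟨fun p => ⟨H p, hne p⟩, hH.subtype_mk _⟩
  let L₀ : C(X, ℂ) := ⟨L, continuousOn_univ.1 hL⟩
  have start : ∀ x, H' (0, x) = ⟨exp (L₀ x), exp_ne_zero _⟩ := fun x =>
    Subtype.ext (hLH x trivial).symm
  refine ⟨fun x => isCoveringMap_exp.liftHomotopy H' L₀ start (1, x), by fun_prop, fun x _ => ?_⟩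
  exact congrArg Subtype.val
    (congrFun (isCoveringMap_exp.liftHomotopy_lifts H' L₀ start) (1, x))

theorem of_homotopy {H : I × X → ℂ} (hH : ContinuousOn H (univ ×ˢ s))
    (hne : ∀ t, ∀ x ∈ s, H (t, x) ≠ 0) (h₀ : HasLogOn (fun x => H (0, x)) s) :
    HasLogOn (fun x => H (1, x)) s := by
  obtain ⟨L, hL, hLH⟩ := h₀
  refine of_domRestrict (of_homotopy_univ (H := fun p : I × s => H (p.1, p.2)) ?_
    (fun p => hne p.1 p.2 p.2.2) ⟨fun x => L x, ?_, fun x _ => hLH x x.2⟩)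
  · exact hH.comp_continuous (by fun_prop) fun p => ⟨trivial, p.2.2⟩
  · exact (continuousOn_iff_continuous_domRestrict.1 hL).continuousOn

end HasLogOn

theorem exists_eqOn_add_of_exp_eqOn {X : Type*} [TopologicalSpace X] {s : Set X}
    (hs : IsPreconnected s) {L M : X → ℂ} (hL : ContinuousOn L s) (hM : ContinuousOn M s)
    (hLM : ∀ x ∈ s, exp (L x) = exp (M x)) :
    ∃ c, exp c = 1 ∧ EqOn L (fun x => M x + c) s := by
  rcases s.eq_empty_or_nonempty with rfl | ⟨a, ha⟩
  · exact ⟨0, exp_zero, eqOn_empty _ _⟩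
  have hc : exp (L a - M a) = 1 := by
    rw [exp_sub, hLM a ha, div_self (exp_ne_zero _)]
  refine ⟨L a - M a, hc, isCoveringMap_exp.eqOn_of_comp_eqOn hs hL (by fun_prop) ?_ ha (by ring)⟩
  intro x hx
  exact Subtype.ext (by simp only [comp_apply, exp_add, hc, mul_one, hLM x hx])

theorem HasLogOn.union {X : Type*} [TopologicalSpace X] {g : X → ℂ} {s t : Set X}
    (hs : IsOpen s) (ht : IsOpen t) (hst : IsPreconnected (s ∩ t))
    (hgs : HasLogOn g s) (hgt : HasLogOn g t) : HasLogOn g (s ∪ t) := by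
  classical
  obtain ⟨L, hL, hLg⟩ := hgs
  obtain ⟨M, hM, hMg⟩ := hgt
  obtain ⟨c, hc, hLM⟩ := exists_eqOn_add_of_exp_eqOn hst (hL.mono inter_subset_left)
    (hM.mono inter_subset_right) fun x hx => by rw [hLg x hx.1, hMg x hx.2]
  let N : X → ℂ := s.piecewise L fun x => M x + c
  have hNs : EqOn N L s := s.piecewise_eqOn _ _
  have hNt : EqOn N (fun x => M x + c) t := fun x hxt => by
    by_cases hxs : x ∈ s
    · exact (hNs hxs).trans (hLM ⟨hxs, hxt⟩)
    · exact s.piecewise_eq_of_notMem _ _ hxs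
  refine ⟨N, (hL.congr hNs).union_of_isOpen ((hM.add_const c).congr hNt) hs ht, ?_⟩
  rintro x (hx | hx)
  · rw [hNs hx, hLg x hx]
  · rw [hNt hx, exp_add, hc, mul_one, hMg x hx]

theorem not_hasLogOn_sub_compl_singleton (w : ℂ) : ¬ HasLogOn (fun z => z - w) {w}ᶜ := by
  rintro ⟨L, hL, hLexp⟩
  have hloop : ∀ θ : ℝ, circleMap w 1 θ ∈ ({w}ᶜ : Set ℂ) := fun θ =>
    circleMap_ne_center one_ne_zero
  obtain ⟨c, -, hc⟩ := exists_eqOn_add_of_exp_eqOn (isPreconnected_univ (α := ℝ))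
    (L := fun θ => L (circleMap w 1 θ)) (M := fun θ => θ * Complex.I)
    (hL.comp_continuous (continuous_circleMap w 1) hloop).continuousOn (by fun_prop)
    fun θ _ => by rw [hLexp _ (hloop θ)]; simp [circleMap]
  have hperiod : L (circleMap w 1 (2 * π)) = L (circleMap w 1 0) := by
    rw [(periodic_circleMap w 1).eq]
  have h2π : ((2 * π : ℝ) : ℂ) * Complex.I + c = (0 : ℝ) * Complex.I + c :=
    (hc trivial).symm.trans (hperiod.trans (hc trivial))
  simp [Real.pi_ne_zero] at h2π

/-- The function `z ↦ (z - q)⁻¹` on the Riemann sphere, with value `0` at `∞` (and the junk value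
`0` at its pole `q`). -/
def invSub (q : ℂ) (p : OnePoint ℂ) : ℂ := p.elim 0 fun z => (z - q)⁻¹

theorem continuousOn_invSub (q : ℂ) : ContinuousOn (invSub q) {(q : OnePoint ℂ)}ᶜ := by
  intro p hp
  apply ContinuousAt.continuousWithinAt
  induction p using OnePoint.rec with
  | infty =>
    rw [OnePoint.continuousAt_infty', Filter.coclosedCompact_eq_cocompact,
      ← Metric.cobounded_eq_cocompact]
    exact Filter.tendsto_inv₀_cobounded.comp (tendsto_sub_const_cobounded q)
  | coe z =>
    have hzq : z - q ≠ 0 := sub_ne_zero.2 (by simpa using hp)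
    exact OnePoint.continuousAt_coe.2 ((continuousAt_id.sub continuousAt_const).inv₀ hzq)

theorem one_sub_mul_invSub_ne_zero {q z : ℂ} {p : OnePoint ℂ} (hpq : p ≠ q) (hpz : p ≠ z) :
    1 - (z - q) * invSub q p ≠ 0 := by
  induction p using OnePoint.rec with
  | infty => simp [invSub]
  | coe y =>
    have hyq : y - q ≠ 0 := sub_ne_zero.2 (by simpa using hpq)
    have hyz : y - z ≠ 0 := sub_ne_zero.2 (by simpa using hpz)
    have : 1 - (z - q) * invSub q y = (y - z) / (y - q) := by
      simp only [invSub, OnePoint.elim_some]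
      field_simp
      ring
    rw [this]
    exact div_ne_zero hyz hyq

theorem hasLogOn_sub_compl_range {w q : ℂ} (γ : Path (∞ : OnePoint ℂ) w)
    (hq : (q : OnePoint ℂ) ∉ range γ) :
    HasLogOn (fun z : ℂ => z - w) ((↑) ⁻¹' (range γ)ᶜ) := by
  have hγq : ∀ t, γ t ≠ q := fun t ht => hq ⟨t, ht⟩
  have hwq : w - q ≠ 0 := sub_ne_zero.2 fun h => hγq 1 (by rw [γ.target, h])
  have hcont : Continuous fun t => invSub q (γ t) :=
    (continuousOn_invSub q).comp_continuous γ.continuous hγq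
  have hlog : HasLogOn (fun z : ℂ => 1 - (z - q) * invSub q (γ 1)) ((↑) ⁻¹' (range γ)ᶜ) := by
    refine HasLogOn.of_homotopy (H := fun p : I × ℂ => 1 - (p.2 - q) * invSub q (γ p.1))
      (Continuous.continuousOn ?_)
      (fun t z hz => one_sub_mul_invSub_ne_zero (hγq t) fun h => hz ⟨t, h⟩) ?_
    · exact continuous_const.sub
        ((continuous_snd.sub continuous_const).mul (hcont.comp continuous_fst))
    · simpa [invSub] using HasLogOn.const one_ne_zero _
  refine (hlog.mul (HasLogOn.const (neg_ne_zero.2 hwq) _)).congr fun z _ => ?_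
  simp only [γ.target, invSub, OnePoint.elim_some]
  field_simp
  ring

theorem exists_mem_range_notMem_endpoints {X : Type*} [TopologicalSpace X] [T1Space X]
    {a b : X} (hab : a ≠ b) (γ : Path a b) : ∃ p ∈ range γ, p ∉ ({a, b} : Set X) := by
  have hinf : (range γ).Infinite := (isPreconnected_range γ.continuous).infinite_of_nontrivial
    ⟨a, γ.source_mem_range, b, γ.target_mem_range, hab⟩
  exact hinf.exists_notMem_finite (toFinite {a, b})

theorem range_union_range_ne_univ {V : Type*} [NormedAddCommGroup V] [NormedSpace ℝ V]
    [LocallyCompactSpace V] (hV : 1 < Module.rank ℝ V) {w : V}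
    (γ₁ γ₂ : Path (∞ : OnePoint V) w) (hγ : range γ₁ ∩ range γ₂ ⊆ {∞, (w : OnePoint V)}) :
    range γ₁ ∪ range γ₂ ≠ univ := by
  intro hcover
  have hclosed (γ : Path (∞ : OnePoint V) w) : IsClosed (((↑) : V → OnePoint V) ⁻¹' range γ) :=
    (isCompact_range γ.continuous).isClosed.preimage OnePoint.continuous_coe
  have hne (γ : Path (∞ : OnePoint V) w) :
      (({w}ᶜ : Set V) ∩ ((↑) : V → OnePoint V) ⁻¹' range γ).Nonempty := by
    obtain ⟨p, hp, hpw⟩ := exists_mem_range_notMem_endpoints (OnePoint.infty_ne_coe w) γ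
    induction p using OnePoint.rec with
    | infty => simp at hpw
    | coe z => exact ⟨z, by simpa using hpw, hp⟩
  obtain ⟨z, hzw, hz⟩ := isPreconnected_closed_iff.1
    (isConnected_compl_singleton_of_one_lt_rank hV w).isPreconnected _ _ (hclosed γ₁) (hclosed γ₂)
    (fun z _ => hcover.ge (mem_univ (z : OnePoint V))) (hne γ₁) (hne γ₂)
  simpa [show z ≠ w from hzw] using hγ hz

theorem not_isPreconnected_compl_range_union_range_onePoint {w : ℂ}
    (γ₁ γ₂ : Path (∞ : OnePoint ℂ) w) (hγ : range γ₁ ∩ range γ₂ ⊆ {∞, (w : OnePoint ℂ)}) :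
    ¬ IsPreconnected (range γ₁ ∪ range γ₂)ᶜ := by
  intro hconn
  obtain ⟨q, hq⟩ : ∃ q : ℂ, (q : OnePoint ℂ) ∉ range γ₁ ∪ range γ₂ := by
    have hrank : 1 < Module.rank ℝ ℂ := by simp [rank_real_complex]
    obtain ⟨p, hp⟩ := (ne_univ_iff_exists_notMem _).1 (range_union_range_ne_univ hrank γ₁ γ₂ hγ)
    induction p using OnePoint.rec with
    | infty => exact (hp (Or.inl γ₁.source_mem_range)).elim
    | coe z => exact ⟨z, hp⟩
  rw [mem_union, not_or] at hq
  let O (γ : Path (∞ : OnePoint ℂ) w) : Set ℂ := (↑) ⁻¹' (range γ)ᶜ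
  have hO (γ) : IsOpen (O γ) :=
    (isCompact_range γ.continuous).isClosed.isOpen_compl.preimage OnePoint.continuous_coe
  have hO_inter : IsPreconnected (O γ₁ ∩ O γ₂) := by
    rw [← preimage_inter, ← compl_union,
      ← OnePoint.isOpenEmbedding_coe.isInducing.isPreconnected_image,
      image_preimage_eq_of_subset]
    · exact hconn
    · rw [← OnePoint.compl_infty, compl_subset_compl, singleton_subset_iff]
      exact Or.inl γ₁.source_mem_range
  have hO_union : {w}ᶜ ⊆ O γ₁ ∪ O γ₂ := fun z hz => by
    rw [← preimage_union, ← compl_inter]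
    exact fun hz' => by simpa [show z ≠ w from hz] using hγ hz'
  exact not_hasLogOn_sub_compl_singleton w
    (((hasLogOn_sub_compl_range γ₁ hq.1).union (hO γ₁) (hO γ₂) hO_inter
      (hasLogOn_sub_compl_range γ₂ hq.2)).mono hO_union)

section Sphere

variable {E : Type*} [NormedAddCommGroup E] [InnerProductSpace ℝ E]

theorem exists_homeomorph_onePoint_sphere {V : Type*} [NormedAddCommGroup V] [NormedSpace ℝ V]
    [FiniteDimensional ℝ V] (hVE : Module.finrank ℝ E = Module.finrank ℝ V + 1)
    (a : sphere (0 : E) 1) : ∃ e : OnePoint V ≃ₜ sphere (0 : E) 1, e ∞ = a := by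
  have : FiniteDimensional ℝ E := .of_finrank_pos (by lia)
  have : Fact (Module.finrank ℝ E = Module.finrank ℝ V + 1) := ⟨hVE⟩
  have ha : ‖(a : E)‖ = 1 := norm_eq_of_mem_sphere a
  have hfinrank : Module.finrank ℝ V = Module.finrank ℝ (Submodule.span ℝ {(a : E)})ᗮ :=
    (Submodule.finrank_orthogonal_span_singleton (ne_zero_of_mem_unit_sphere a)).symm
  let φ := (ContinuousLinearEquiv.ofFinrankEq hfinrank).toHomeomorph
  exact ⟨φ.onePointCongr.trans (onePointHyperplaneHomeoUnitSphere ha),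
    by simp [onePointHyperplaneHomeoUnitSphere]⟩

theorem not_isPreconnected_compl_range_union_range (hE : Module.finrank ℝ E = 3)
    {a b : sphere (0 : E) 1} (hab : a ≠ b) (γ₁ γ₂ : Path a b)
    (hγ : range γ₁ ∩ range γ₂ ⊆ {a, b}) : ¬ IsPreconnected (range γ₁ ∪ range γ₂)ᶜ := by
  obtain ⟨e, rfl⟩ := exists_homeomorph_onePoint_sphere (V := ℂ) (by simp [hE]) a
  obtain ⟨p, rfl⟩ := e.surjective b
  induction p using OnePoint.rec with
  | infty => exact (hab rfl).elim
  | coe w =>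
    let lift (γ : Path (e ∞) (e w)) : Path (∞ : OnePoint ℂ) w :=
      (γ.map e.symm.continuous).cast (e.symm_apply_apply _).symm (e.symm_apply_apply _).symm
    have hrange (γ) : range (lift γ) = e ⁻¹' range γ := by
      rw [← e.image_symm, ← range_comp]
      rfl
    have hlift : range (lift γ₁) ∩ range (lift γ₂) ⊆ {∞, (w : OnePoint ℂ)} := by
      rw [hrange, hrange, ← preimage_inter]
      exact fun p hp => by simpa using hγ hp
    have := not_isPreconnected_compl_range_union_range_onePoint _ _ hlift
    rwa [hrange, hrange, ← preimage_union, ← preimage_compl, e.isPreconnected_preimage] at this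

theorem not_isPreconnected_compl_range_of_periodic (hE : Module.finrank ℝ E = 3)
    {F : ℝ → sphere (0 : E) 1} (hF : Continuous F) {T x y : ℝ} (hFT : F.Periodic T) (hxy : x < y)
    (hyT : y < x + T) (hinj : ∀ s ∈ Icc x y, ∀ t ∈ Ico x (x + T), F t = F s → t = s) :
    ¬ IsPreconnected (range F)ᶜ := by
  have hab : F x ≠ F y := fun h =>
    hxy.ne (hinj y (right_mem_Icc.2 hxy.le) x (left_mem_Ico.2 (hxy.trans hyT)) h)
  let γ₁ : Path (F x) (F y) := (Path.segment x y).map hF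
  let γ₂ : Path (F x) (F y) := ((Path.segment (x + T) y).map hF).cast (hFT x).symm rfl
  have hγ₁ : range γ₁ = F '' Icc x y := by
    rw [← segment_eq_Icc hxy.le, ← Path.range_segment, ← range_comp]
    rfl
  have hγ₂ : range γ₂ = F '' Icc y (x + T) := by
    rw [← segment_eq_Icc hyT.le, segment_symm, ← Path.range_segment, ← range_comp]
    rfl
  have hunion : range γ₁ ∪ range γ₂ = range F := by
    rw [hγ₁, hγ₂, ← image_union, Icc_union_Icc_eq_Icc hxy.le hyT.le,
      hFT.image_Icc (by linarith)]
  rw [← hunion]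
  refine not_isPreconnected_compl_range_union_range hE hab γ₁ γ₂ ?_
  rw [hγ₁, hγ₂]
  rintro _ ⟨⟨s, hs, rfl⟩, t, ht, hts⟩
  rcases ht.2.eq_or_lt with rfl | htT
  · exact Or.inl (hts.symm.trans (hFT x))
  · have hts' : t = s := hinj s hs t ⟨hxy.le.trans ht.1, htT⟩ hts
    have hsy : s = y := le_antisymm hs.2 (hts' ▸ ht.1)
    exact Or.inr (congrArg F hsy)

end Sphere

/-- The parametrization `θ ↦ (cos θ, sin θ)` of the unit circle by angle, obtained from `circleMap`
by identifying `ℂ` with the Euclidean plane. -/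
def circleParam (θ : ℝ) : EuclideanSpace ℝ (Fin 2) :=
  Complex.orthonormalBasisOneI.repr (circleMap 0 1 θ)

theorem continuous_circleParam : Continuous circleParam :=
  Complex.orthonormalBasisOneI.repr.continuous.comp (continuous_circleMap 0 1)

theorem periodic_circleParam : circleParam.Periodic (2 * π) :=
  (periodic_circleMap 0 1).comp Complex.orthonormalBasisOneI.repr

theorem range_circleParam : range circleParam = circleS := by
  change range (Complex.orthonormalBasisOneI.repr ∘ circleMap 0 1) = sphere 0 1
  rw [range_comp, range_circleMap, abs_one, LinearIsometryEquiv.image_sphere, map_zero]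

theorem circleParam_mem (θ : ℝ) : circleParam θ ∈ circleS :=
  range_circleParam ▸ mem_range_self θ

theorem injOn_circleParam (x : ℝ) : InjOn circleParam (Ico x (x + 2 * π)) := by
  refine Complex.orthonormalBasisOneI.repr.injective.comp_injOn fun s hs t ht hst => ?_
  exact injOn_circleMap_of_abs_sub_le' one_ne_zero (by linarith) hs ht hst

theorem exists_mapsTo_circleParam_Icc {V : Set (EuclideanSpace ℝ (Fin 2))} (hV : IsOpen V) {x : ℝ}
    (hx : circleParam x ∈ V) : ∃ y, x < y ∧ y < x + 2 * π ∧ MapsTo circleParam (Icc x y) V := by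
  obtain ⟨y, hxy, hsub⟩ : ∃ y ∈ Ioi x, Icc x y ⊆ circleParam ⁻¹' V ∩ Iio (x + 2 * π) :=
    mem_nhdsGE_iff_exists_Icc_subset.1 <| mem_nhdsWithin_of_mem_nhds <| Filter.inter_mem
      ((hV.preimage continuous_circleParam).mem_nhds hx)
      (Iio_mem_nhds (lt_add_of_pos_right x Real.two_pi_pos))
  exact ⟨y, hxy, (hsub (right_mem_Icc.2 (le_of_lt hxy))).2, fun s hs => (hsub hs).1⟩

/-- **Strong Jordan separation, separation part.**  If `f : S¹ → S²` is continuous and its set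
of injective points contains a nonempty (relatively) open subset of `S¹`, then `S² \ f(S¹)` is
not connected. -/
theorem strong_jordan_separation_separates
    (f : EuclideanSpace ℝ (Fin 2) → EuclideanSpace ℝ (Fin 3))
    (hf : ContinuousOn f circleS) (hmaps : MapsTo f circleS sphereS)
    (U : Set (EuclideanSpace ℝ (Fin 2))) (hUne : U.Nonempty) (hUI : U ⊆ injPts f)
    (hUopen : ∃ V, IsOpen V ∧ U = V ∩ circleS) :
    ¬ IsPreconnected (sphereS \ f '' circleS) := by
  obtain ⟨V, hV, rfl⟩ := hUopen
  obtain ⟨p, hpV, hp⟩ := hUne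
  obtain ⟨x, rfl⟩ := range_circleParam.ge hp
  obtain ⟨y, hxy, hy, harc⟩ := exists_mapsTo_circleParam_Icc hV hpV
  let F : ℝ → sphere (0 : EuclideanSpace ℝ (Fin 3)) 1 := fun θ =>
    ⟨f (circleParam θ), hmaps (circleParam_mem θ)⟩
  have hF : Continuous F :=
    (hf.comp_continuous continuous_circleParam circleParam_mem).subtype_mk _
  have hFT : F.Periodic (2 * π) := fun θ => Subtype.ext (congrArg f (periodic_circleParam θ))
  have hinj : ∀ s ∈ Icc x y, ∀ t ∈ Ico x (x + 2 * π), F t = F s → t = s := fun s hs t ht hts =>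
    injOn_circleParam x ht ⟨hs.1, hs.2.trans_lt hy⟩ <|
      (hUI ⟨harc hs, circleParam_mem s⟩).2 _ (circleParam_mem t) (congrArg Subtype.val hts)
  have himage : Subtype.val '' (range F)ᶜ = sphereS \ f '' circleS := by
    rw [image_compl_eq_range_sdiff_image Subtype.val_injective, Subtype.range_coe, ← range_comp,
      ← range_circleParam, ← range_comp]
    rfl
  rw [← himage, IsInducing.subtypeVal.isPreconnected_image]
  exact not_isPreconnected_compl_range_of_periodic (by simp) hF hFT hxy hy hinj
end
end

section
/- Non-surjectivity lemma: Let f : S¹ → S² be a continuous map whose set of injective points I(f) = {p ∈ S¹ : f⁻¹({f(p)}) = {p}} contains a nonempty open subset of S¹. Then f is not surjective, i.e. f(S¹) ≠ S². -/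
open Metric Set

noncomputable section

/-!
A point `x` of a space is a local cut point if small neighbourhoods of `x` fall apart when `x` is
removed. Every point of a `1`-manifold is a local cut point, and no point of a manifold of
dimension at least `2` is. A continuous closed surjection whose injective points include the open
set `U` sends an open set `W ⊆ U` to the complement of the image of `Wᶜ`, so it restricts to an
open embedding of `U`. Open embeddings preserve local cut points, so for such a map from a
`1`-manifold to a manifold of larger dimension `U` is empty.
-/

open Topology Function Module

section LocalCutPoint

variable {X Y : Type*} [TopologicalSpace X] [TopologicalSpace Y]

/-- A local cut point of a space: every sufficiently small neighbourhood is disconnected by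
removing the point. It is the local invariant that separates curves from manifolds of higher
dimension. Neighbourhoods need not be open or connected, and isolated points are not local cut
points, since `∅` is preconnected. -/
def IsLocalCutPoint (x : X) : Prop :=
  ∃ V ∈ 𝓝 x, ∀ W ∈ 𝓝 x, W ⊆ V → ¬IsPreconnected (W \ {x})

theorem isLocalCutPoint_map_iff {g : X → Y} (hg : IsOpenEmbedding g) (x : X) :
    IsLocalCutPoint (g x) ↔ IsLocalCutPoint x := by
  have image_sdiff_singleton (W : Set X) : g '' (W \ {x}) = g '' W \ {g x} := by
    rw [image_sdiff hg.injective, image_singleton]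
  constructor
  · rintro ⟨V, hV, hcut⟩
    refine ⟨g ⁻¹' V, hg.continuous.continuousAt.preimage_mem_nhds hV, fun W hW hWV hconn ↦ ?_⟩
    refine hcut (g '' W) (hg.image_mem_nhds.2 hW) (image_subset_iff.2 hWV) ?_
    rw [← image_sdiff_singleton]
    exact hg.isInducing.isPreconnected_image.2 hconn
  · rintro ⟨V, hV, hcut⟩
    refine ⟨g '' V, hg.image_mem_nhds.2 hV, fun W hW hWV hconn ↦ ?_⟩
    have image_preimage : g '' (g ⁻¹' W) = W :=
      image_preimage_eq_of_subset (hWV.trans (image_subset_range g V))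
    refine hcut (g ⁻¹' W) (hg.continuous.continuousAt.preimage_mem_nhds hW)
      ((preimage_mono hWV).trans_eq (hg.injective.preimage_image V)) ?_
    rwa [← hg.isInducing.isPreconnected_image, image_sdiff_singleton, image_preimage]

theorem isLocalCutPoint_map_iff_of_domRestrict {f : X → Y} {U : Set X} (hU : IsOpen U)
    (hf : IsOpenEmbedding (U.domRestrict f)) {x : X} (hx : x ∈ U) :
    IsLocalCutPoint (f x) ↔ IsLocalCutPoint x :=
  (isLocalCutPoint_map_iff hf ⟨x, hx⟩).trans
    (isLocalCutPoint_map_iff hU.isOpenEmbedding_subtypeVal ⟨x, hx⟩).symm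

theorem isLocalCutPoint_chartAt_iff (H : Type*) [TopologicalSpace H] [ChartedSpace H X] (x : X) :
    IsLocalCutPoint (chartAt H x x) ↔ IsLocalCutPoint x :=
  isLocalCutPoint_map_iff_of_domRestrict (chartAt H x).open_source
    (chartAt H x).isOpenEmbedding_restrict (mem_chart_source H x)

theorem isLocalCutPoint_of_linearOrder [LinearOrder X] [OrderClosedTopology X] (x : X)
    [(𝓝[<] x).NeBot] [(𝓝[>] x).NeBot] : IsLocalCutPoint x := by
  refine ⟨univ, Filter.univ_mem, fun W hW _ hconn ↦ ?_⟩
  obtain ⟨a, haW, hax⟩ : (W ∩ Iio x).Nonempty :=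
    Filter.nonempty_of_mem (Filter.inter_mem (mem_nhdsWithin_of_mem_nhds hW) self_mem_nhdsWithin)
  obtain ⟨b, hbW, hxb⟩ : (W ∩ Ioi x).Nonempty :=
    Filter.nonempty_of_mem (Filter.inter_mem (mem_nhdsWithin_of_mem_nhds hW) self_mem_nhdsWithin)
  exact (hconn.Icc_subset ⟨haW, hax.ne⟩ ⟨hbW, hxb.ne'⟩ ⟨hax.le, hxb.le⟩).2 rfl

end LocalCutPoint

section NormedSpace

variable {E : Type*} [NormedAddCommGroup E] [NormedSpace ℝ E]

theorem isLocalCutPoint_of_finrank_eq_one (hE : finrank ℝ E = 1) (x : E) : IsLocalCutPoint x := by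
  have : FiniteDimensional ℝ E := .of_finrank_pos (hE ▸ one_pos)
  let toReal : E ≃L[ℝ] ℝ := .ofFinrankEq (hE.trans (finrank_self ℝ).symm)
  exact (isLocalCutPoint_map_iff toReal.toHomeomorph.isOpenEmbedding x).1
    (isLocalCutPoint_of_linearOrder _)

theorem isPreconnected_ball_sdiff_center (hE : 1 < Module.rank ℝ E) (x : E) {r : ℝ} (hr : 0 < r) :
    IsPreconnected (ball x r \ {x}) := by
  let e := OpenPartialHomeomorph.univBall x r
  have image_compl_zero : e '' {0}ᶜ = ball x r \ {x} := by
    have he : InjOn e univ := by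
      simpa only [e, OpenPartialHomeomorph.univBall_source] using e.injOn
    have he_range : e '' univ = ball x r := by
      simpa only [e, OpenPartialHomeomorph.univBall_source,
        OpenPartialHomeomorph.univBall_target x hr] using e.image_source_eq_target
    rw [compl_eq_univ_sdiff, he.image_sdiff_subset (subset_univ _), he_range, image_singleton,
      OpenPartialHomeomorph.univBall_apply_zero]
  rw [← image_compl_zero]
  exact (isConnected_compl_singleton_of_one_lt_rank hE 0).isPreconnected.image e
    (OpenPartialHomeomorph.continuous_univBall x r).continuousOn

theorem not_isLocalCutPoint_of_one_lt_rank (hE : 1 < Module.rank ℝ E) (x : E) :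
    ¬IsLocalCutPoint x := by
  rintro ⟨V, hV, hcut⟩
  obtain ⟨r, hr, hrV⟩ := Metric.mem_nhds_iff.1 hV
  exact hcut (ball x r) (ball_mem_nhds x hr) hrV (isPreconnected_ball_sdiff_center hE x hr)

end NormedSpace

section InjectivePoints

theorem preimage_restrict_eq_singleton {α β : Type*} {f : α → β} {s : Set α} {t : Set β}
    (hf : MapsTo f s t) {p : s} (hp : ∀ q ∈ s, f q = f p → q = p) :
    hf.restrict f s t ⁻¹' {hf.restrict f s t p} = {p} :=
  Subset.antisymm (fun q hq ↦ Subtype.ext (hp q q.2 (congrArg Subtype.val hq)))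
    (singleton_subset_iff.2 rfl)

variable {X Y : Type*} [TopologicalSpace X] [TopologicalSpace Y] {f : X → Y} {U : Set X}

theorem isOpen_image_of_preimage_eq_singleton (hf : IsClosedMap f) (hsurj : Surjective f)
    (hU : IsOpen U) (hinj : ∀ p ∈ U, f ⁻¹' {f p} = {p}) : IsOpen (f '' U) := by
  have disjoint_images : Disjoint (f '' U) (f '' Uᶜ) := by
    rw [Set.disjoint_left]
    rintro _ ⟨p, hp, rfl⟩ ⟨q, hq, hqp⟩
    have q_eq_p : q ∈ ({p} : Set X) := hinj p hp ▸ hqp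
    exact hq (mem_singleton_iff.1 q_eq_p ▸ hp)
  have image_eq : f '' U = (f '' Uᶜ)ᶜ :=
    disjoint_images.subset_compl_right.antisymm (compl_subset_comm.1 (subset_image_compl hsurj))
  rw [image_eq]
  exact (hf _ hU.isClosed_compl).isOpen_compl

theorem isOpenEmbedding_domRestrict_of_preimage_eq_singleton (hf : Continuous f)
    (hclosed : IsClosedMap f) (hsurj : Surjective f) (hU : IsOpen U)
    (hinj : ∀ p ∈ U, f ⁻¹' {f p} = {p}) : IsOpenEmbedding (U.domRestrict f) := by
  refine .of_continuous_injective_isOpenMap (hf.comp continuous_subtype_val) ?_ fun W hW ↦ ?_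
  · rintro ⟨p, hp⟩ ⟨q, hq⟩ (hpq : f p = f q)
    have p_mem : p ∈ f ⁻¹' {f q} := hpq
    rw [hinj q hq] at p_mem
    exact Subtype.ext p_mem
  · rw [domRestrict_eq, image_comp]
    refine isOpen_image_of_preimage_eq_singleton hclosed hsurj (hU.isOpenMap_subtype_val W hW) ?_
    rintro _ ⟨p, -, rfl⟩
    exact hinj p p.2

end InjectivePoints

theorem injective_points_not_surjective_general {H E M N : Type*}
    [NormedAddCommGroup H] [NormedSpace ℝ H] (hH : finrank ℝ H = 1)
    [NormedAddCommGroup E] [NormedSpace ℝ E] (hE : 1 < Module.rank ℝ E)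
    [TopologicalSpace M] [ChartedSpace H M] [TopologicalSpace N] [ChartedSpace E N]
    {f : M → N} (hf : Continuous f) (hclosed : IsClosedMap f)
    {U : Set M} (hUne : U.Nonempty) (hU : IsOpen U) (hinj : ∀ p ∈ U, f ⁻¹' {f p} = {p}) :
    ¬Surjective f := by
  intro hsurj
  obtain ⟨p, hp⟩ := hUne
  have hcut : IsLocalCutPoint p :=
    (isLocalCutPoint_chartAt_iff H p).1 (isLocalCutPoint_of_finrank_eq_one hH _)
  have hcut_image : IsLocalCutPoint (f p) :=
    (isLocalCutPoint_map_iff_of_domRestrict hU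
      (isOpenEmbedding_domRestrict_of_preimage_eq_singleton hf hclosed hsurj hU hinj) hp).2 hcut
  exact not_isLocalCutPoint_of_one_lt_rank hE _ ((isLocalCutPoint_chartAt_iff E (f p)).2 hcut_image)

/-- **Non-surjectivity lemma.**  If the set of injective points of a continuous `f : S¹ → S²`
contains a nonempty relatively open subset of `S¹`, then `f(S¹) ≠ S²`. -/
theorem injective_points_not_surjective
    (f : EuclideanSpace ℝ (Fin 2) → EuclideanSpace ℝ (Fin 3))
    (hf : ContinuousOn f circleS) (hmaps : MapsTo f circleS sphereS)
    (U : Set (EuclideanSpace ℝ (Fin 2))) (hUne : U.Nonempty) (hUI : U ⊆ injPts f)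
    (hUopen : ∃ V, IsOpen V ∧ U = V ∩ circleS) :
    f '' circleS ≠ sphereS := by
  obtain ⟨V, hV, rfl⟩ := hUopen
  obtain ⟨p, hpV, hp⟩ := hUne
  have hdim_circle : finrank ℝ (EuclideanSpace ℝ (Fin 1)) = 1 := finrank_euclideanSpace_fin
  have hdim_sphere : 1 < Module.rank ℝ (EuclideanSpace ℝ (Fin 2)) := by
    simp [← finrank_eq_rank]
  have hF : Continuous (MapsTo.restrict f (sphere 0 1) (sphere 0 1) hmaps) :=
    hf.mapsToRestrict hmaps
  exact fun himage ↦ injective_points_not_surjective_general hdim_circle hdim_sphere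
    hF hF.isClosedMap ⟨⟨p, hp⟩, hpV⟩ (hV.preimage continuous_subtype_val)
    (fun q hqV ↦ preimage_restrict_eq_singleton hmaps (hUI ⟨hqV, q.2⟩).2)
    (hmaps.restrict_surjective_iff.2 himage.ge)
end
end

section
/- Small-disk density claim: Let (Uᵢ)_{i ∈ ℕ} be a countable family of pairwise disjoint nonempty open round disks in S² (each Uᵢ a metric ball for the metric on S² induced from ℝ³) whose union ⋃ᵢ Uᵢ is dense in S². Let p ∈ S² be a point with p ∉ closure(Uᵢ) for every i. Then for every neighborhood N of p in S² there exists an index i with Uᵢ ⊆ N; equivalently, for every ε > 0 there exists i with Uᵢ contained in the open ball of radius ε about p. -/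
open Metric Set

noncomputable section

/-- The unit sphere in Euclidean 3-space, as a metric space with the metric induced from ℝ³. -/
abbrev Sph : Type := (Metric.sphere (0 : EuclideanSpace ℝ (Fin 3)) 1 : Set (EuclideanSpace ℝ (Fin 3)))

/-!
Disks of radius at least `δ > 0` have `δ`-separated centers, so total boundedness allows only
finitely many of them. Their closures form a closed set missing `p`, so density forces one of the
remaining, smaller, disks to meet any given neighborhood of `p`. A disk that meets a small ball
about `p` and has small radius lies in a slightly larger ball about `p`.
-/

section

variable {ι X : Type*}

theorem exists_notMem_inter_nonempty_of_dense_iUnion [TopologicalSpace X] {U : ι → Set X}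
    (hU : Dense (⋃ i, U i)) {I : Set ι} (hI : I.Finite) {p : X} (hp : ∀ i ∈ I, p ∉ closure (U i))
    {V : Set X} (hV : V ∈ nhds p) : ∃ i ∉ I, (U i ∩ V).Nonempty := by
  have hclosed : IsClosed (⋃ i ∈ I, closure (U i)) :=
    hI.isClosed_biUnion fun _ _ => isClosed_closure
  have hmem : (⋃ i ∈ I, closure (U i))ᶜ ∈ nhds p :=
    hclosed.isOpen_compl.mem_nhds (by simpa using hp)
  obtain ⟨x, hxU, hxV, hxI⟩ := hU.inter_nhds_nonempty (Filter.inter_mem hV hmem)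
  obtain ⟨i, hxi⟩ := mem_iUnion.1 hxU
  exact ⟨i, fun hi => hxI (mem_biUnion hi (subset_closure hxi)), x, hxi, hxV⟩

variable [PseudoMetricSpace X]

theorem finite_of_totallyBounded_image_of_pairwise_le_dist {f : ι → X} {s : Set ι} {δ : ℝ}
    (hf : TotallyBounded (f '' s)) (hδ : 0 < δ) (hs : s.Pairwise fun i j => δ ≤ dist (f i) (f j)) :
    s.Finite := by
  obtain ⟨t, ht, hcover⟩ := Metric.totallyBounded_iff.1 hf (δ / 2) (half_pos hδ)
  have hsub (y : X) : {i ∈ s | f i ∈ ball y (δ / 2)}.Subsingleton := by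
    rintro i ⟨hi, hiy⟩ j ⟨hj, hjy⟩
    by_contra hij
    have hdist : dist (f i) (f j) < δ :=
      (dist_triangle_right (f i) (f j) y).trans_lt ((add_lt_add hiy hjy).trans_eq (add_halves δ))
    exact (hs hi hj hij).not_gt hdist
  refine (ht.biUnion fun y _ => (hsub y).finite).subset fun i hi => ?_
  obtain ⟨y, hy, hiy⟩ := mem_iUnion₂.1 (hcover (mem_image_of_mem f hi))
  exact mem_biUnion hy ⟨hi, hiy⟩

theorem finite_setOf_le_radius_of_pairwise_disjoint_ball {c : ι → X} {r : ι → ℝ}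
    (hc : TotallyBounded (range c))
    (hdisj : Pairwise (Function.onFun Disjoint fun i => ball (c i) (r i))) {δ : ℝ} (hδ : 0 < δ) :
    {i | δ ≤ r i}.Finite := by
  refine finite_of_totallyBounded_image_of_pairwise_le_dist (hc.subset (image_subset_range c _)) hδ
    fun i hi j hj hij => ?_
  have hcj : c j ∉ ball (c i) (r i) :=
    disjoint_right.1 (hdisj hij) (mem_ball_self (hδ.trans_le hj))
  exact hi.trans (not_lt.1 (mt mem_ball'.2 hcj))

theorem ball_subset_ball_of_inter_nonempty {x p : X} {r δ ε : ℝ}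
    (h : (ball x r ∩ ball p δ).Nonempty) (hε : 2 * r + δ ≤ ε) : ball x r ⊆ ball p ε :=
  ball_subset_ball' (by linarith [dist_lt_add_of_nonempty_ball_inter_ball h])

theorem small_disks_near_point_general {c : ι → X} {r : ι → ℝ} (hc : TotallyBounded (range c))
    (hdisj : Pairwise (Function.onFun Disjoint fun i => ball (c i) (r i)))
    (hdense : Dense (⋃ i, ball (c i) (r i))) {p : X} (hp : ∀ i, p ∉ closure (ball (c i) (r i)))
    {N : Set X} (hN : N ∈ nhds p) : ∃ i, 0 < r i ∧ ball (c i) (r i) ⊆ N := by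
  obtain ⟨ε, hε, hεN⟩ := Metric.mem_nhds_iff.1 hN
  have hfin : {i | ε / 4 ≤ r i}.Finite :=
    finite_setOf_le_radius_of_pairwise_disjoint_ball hc hdisj (by positivity)
  obtain ⟨i, hi, hmeet⟩ := exists_notMem_inter_nonempty_of_dense_iUnion hdense hfin
    (fun j _ => hp j) (ball_mem_nhds p (half_pos hε))
  have hri : r i < ε / 4 := not_le.1 hi
  exact ⟨i, nonempty_ball.1 hmeet.left,
    (ball_subset_ball_of_inter_nonempty hmeet (by linarith)).trans hεN⟩

end

/-- **Small-disk density claim.**  Given a countable family of pairwise disjoint nonempty open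
round disks in `S²` whose union is dense, and a point `p` lying in the closure of none of them,
every neighborhood of `p` contains one of the disks. -/
theorem small_disks_near_point
    (U : ℕ → Set Sph) (c : ℕ → Sph) (r : ℕ → ℝ)
    (hr : ∀ i, 0 < r i) (hball : ∀ i, U i = Metric.ball (c i) (r i))
    (hne : ∀ i, (U i).Nonempty)
    (hdisj : Pairwise (Function.onFun Disjoint U))
    (hdense : Dense (⋃ i, U i))
    (p : Sph) (hp : ∀ i, p ∉ closure (U i)) :
    ∀ N ∈ nhds p, ∃ i, U i ⊆ N := by
  obtain rfl : U = fun i => ball (c i) (r i) := funext hball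
  exact fun N hN => (small_disks_near_point_general
    (isCompact_univ.totallyBounded.subset (subset_univ _)) hdisj hdense hp hN).imp fun _ h => h.2
end
end

section
/- Disk-in-connected-open-set claim: Let (Uᵢ)_{i ∈ ℕ} be a countable family of nonempty open round disks in S² whose closures are pairwise disjoint and whose union ⋃ᵢ Uᵢ is dense in S². Let p ∈ S² be a point with p ∉ closure(Uᵢ) for every i, and let V ⊆ S² be a connected open set containing p in its closure. Then there exists an index j with U_j ⊆ V. -/
open Metric Set

noncomputable section

/-!
If no disk is contained in `V`, then the closed disks cover `V`: the diameters of pairwise disjoint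
disks in a compact space tend to zero, so every neighbourhood of a point outside all the closed
disks contains a whole disk. But a connected open set covered by countably many pairwise disjoint
closed sets `C i` lies in one of them, an open-set version of Sierpiński's theorem on continua.
Indeed, if some part of `V` lay outside all the interiors of the `C i`, then by the Baire category
theorem a single `C i` would contain that part near one of its points `x`. A connected neighbourhood
of `x` cannot enter the interior of another `C j` without meeting its frontier, which again lies
outside all the interiors and hence in `C i`; so it is contained in `C i`, and `x` was interior
after all. Thus the interiors cover `V`, and by connectedness one of them suffices. Hence `V` lies
in a single closed disk, which must then contain `p`.
-/

open Filter Topology Function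
open scoped ENNReal

section Sierpinski

variable {X ι : Type*} [TopologicalSpace X]

theorem inter_frontier_nonempty_of_isPreconnected {W A : Set X} (hW : IsPreconnected W)
    (hWA : (W ∩ A).Nonempty) (hWA' : (W \ A).Nonempty) : (W ∩ frontier A).Nonempty := by
  by_contra! hempty
  have hcover : W ⊆ interior A ∪ (closure A)ᶜ := fun z hz ↦ by
    by_contra! hz'
    simp only [mem_union, mem_compl_iff, not_or, not_not] at hz'
    exact hempty.subset ⟨hz, hz'.2, hz'.1⟩
  have hdisj : Disjoint (interior A) (closure A)ᶜ :=
    disjoint_compl_right_iff_subset.2 (interior_subset.trans subset_closure)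
  obtain ⟨x, hxW, hxA⟩ := hWA
  obtain ⟨y, hyW, hyA⟩ := hWA'
  have hxint : x ∈ interior A := (hcover hxW).resolve_right (not_not.2 (subset_closure hxA))
  exact hyA <| interior_subset <| hW.subset_left_of_subset_union isOpen_interior
    isClosed_closure.isOpen_compl hdisj hcover ⟨x, hxW, hxint⟩ hyW

theorem exists_isOpen_inter_subset_of_subset_iUnion_isClosed [LocallyCompactSpace X] [R1Space X]
    [Countable ι] {Y : Set X} (hY : IsLocallyClosed Y) (hne : Y.Nonempty) {C : ι → Set X}
    (hC : ∀ i, IsClosed (C i)) (hcover : Y ⊆ ⋃ i, C i) :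
    ∃ i, ∃ O, IsOpen O ∧ (O ∩ Y).Nonempty ∧ O ∩ Y ⊆ C i := by
  have : LocallyCompactSpace Y := hY.locallyCompactSpace
  have : Nonempty Y := hne.to_subtype
  have hcover' : ⋃ i, ((↑) : Y → X) ⁻¹' C i = univ := by
    rw [← preimage_iUnion]
    exact eq_univ_of_forall fun y ↦ hcover y.2
  obtain ⟨i, y, hy⟩ := nonempty_interior_of_iUnion_of_closed
    (fun i ↦ (hC i).preimage continuous_subtype_val) hcover'
  obtain ⟨O, hO, hOY⟩ := isOpen_induced_iff.1 (isOpen_interior (s := ((↑) : Y → X) ⁻¹' C i))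
  refine ⟨i, O, hO, ⟨y, hOY.superset hy, y.2⟩, fun z ⟨hzO, hzY⟩ ↦ ?_⟩
  have hzC : (⟨z, hzY⟩ : Y) ∈ ((↑) : Y → X) ⁻¹' C i := interior_subset (hOY.subset hzO)
  exact hzC

variable {C : ι → Set X}

theorem frontier_interior_subset_sdiff_iUnion_interior (hC : ∀ i, IsClosed (C i))
    (hdisj : Pairwise (Disjoint on C)) (i : ι) :
    frontier (interior (C i)) ⊆ C i \ ⋃ j, interior (C j) := by
  intro z hz
  have hzC : z ∈ C i := (hC i).closure_interior_subset hz.1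
  refine ⟨hzC, fun hz' ↦ ?_⟩
  obtain ⟨j, hzj⟩ := mem_iUnion.1 hz'
  obtain rfl : i = j := hdisj.eq (not_disjoint_iff.2 ⟨z, hzC, interior_subset hzj⟩)
  exact hz.2 (interior_interior.superset hzj)

theorem subset_of_sdiff_iUnion_interior_subset (hC : ∀ i, IsClosed (C i))
    (hdisj : Pairwise (Disjoint on C)) {W : Set X} (hW : IsPreconnected W)
    (hne : (W \ ⋃ j, interior (C j)).Nonempty) {i : ι} (hi : W \ ⋃ j, interior (C j) ⊆ C i) :
    W ⊆ C i := by
  intro y hy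
  by_cases hyB : y ∈ ⋃ j, interior (C j)
  · obtain ⟨j, hyj⟩ := mem_iUnion.1 hyB
    obtain ⟨z, hzW, hz⟩ := inter_frontier_nonempty_of_isPreconnected hW ⟨y, hy, hyj⟩
      (hne.mono (sdiff_subset_sdiff_right (subset_iUnion_of_subset j subset_rfl)))
    obtain ⟨hzj, hzB⟩ := frontier_interior_subset_sdiff_iUnion_interior hC hdisj j hz
    obtain rfl : i = j := hdisj.eq (not_disjoint_iff.2 ⟨z, hi ⟨hzW, hzB⟩, hzj⟩)
    exact interior_subset hyj
  · exact hi ⟨hy, hyB⟩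

variable [LocallyCompactSpace X] [R1Space X] [LocallyConnectedSpace X] [Countable ι]

theorem subset_iUnion_interior_of_isOpen (hC : ∀ i, IsClosed (C i))
    (hdisj : Pairwise (Disjoint on C)) {V : Set X} (hV : IsOpen V) (hcover : V ⊆ ⋃ i, C i) :
    V ⊆ ⋃ i, interior (C i) := by
  by_contra hsub
  have hlocClosed : IsLocallyClosed (V \ ⋃ i, interior (C i)) :=
    hV.isLocallyClosed.inter (isOpen_iUnion fun _ ↦ isOpen_interior).isClosed_compl.isLocallyClosed
  obtain ⟨i, O, hO, ⟨x, hxO, hxV, hx⟩, hOi⟩ :=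
    exists_isOpen_inter_subset_of_subset_iUnion_isClosed hlocClosed (sdiff_nonempty.2 hsub) hC
      (sdiff_subset.trans hcover)
  obtain ⟨W, hWsub, hWopen, hxW, hWconn⟩ :=
    locallyConnectedSpace_iff_subsets_isOpen_isConnected.1 ‹_› x (O ∩ V)
      ((hO.inter hV).mem_nhds ⟨hxO, hxV⟩)
  have hWi : W ⊆ C i := subset_of_sdiff_iUnion_interior_subset hC hdisj hWconn.isPreconnected
    ⟨x, hxW, hx⟩ fun z ⟨hzW, hz⟩ ↦ hOi ⟨(hWsub hzW).1, (hWsub hzW).2, hz⟩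
  exact hx (mem_iUnion_of_mem i (interior_maximal hWi hWopen hxW))

theorem exists_subset_of_isConnected_of_subset_iUnion_isClosed (hC : ∀ i, IsClosed (C i))
    (hdisj : Pairwise (Disjoint on C)) {V : Set X} (hV : IsOpen V) (hVconn : IsConnected V)
    (hcover : V ⊆ ⋃ i, C i) : ∃ i, V ⊆ C i := by
  have hint := subset_iUnion_interior_of_isOpen hC hdisj hV hcover
  obtain ⟨x, hx⟩ := hVconn.nonempty
  obtain ⟨i, hxi⟩ := mem_iUnion.1 (hint hx)
  refine ⟨i, fun y hy ↦ interior_subset (s := C i) ?_⟩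
  by_contra hyi
  obtain ⟨z, hzV, hz⟩ := inter_frontier_nonempty_of_isPreconnected hVconn.isPreconnected
    ⟨x, hx, hxi⟩ ⟨y, hy, hyi⟩
  exact (frontier_interior_subset_sdiff_iUnion_interior hC hdisj i hz).2 (hint hzV)

end Sierpinski

section NullFamilies

variable {X ι : Type*}

theorem frequently_cofinite_inter_nonempty [TopologicalSpace X] {U : ι → Set X} {q : X}
    (hq : q ∈ closure (⋃ i, U i)) (hqU : ∀ i, q ∉ closure (U i)) {N : Set X} (hN : N ∈ 𝓝 q) :
    ∃ᶠ i in cofinite, (U i ∩ N).Nonempty := by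
  rw [frequently_cofinite_iff_infinite]
  intro hfin
  have hsub : (⋃ i, U i) ∩ N ⊆ ⋃ i ∈ {i | (U i ∩ N).Nonempty}, U i := by
    rintro y ⟨hyU, hyN⟩
    obtain ⟨i, hi⟩ := mem_iUnion.1 hyU
    exact mem_biUnion (show i ∈ {i | (U i ∩ N).Nonempty} from ⟨y, hi, hyN⟩) hi
  have hqN : q ∈ closure ((⋃ i, U i) ∩ N) := by
    rwa [mem_closure_iff_nhdsWithin_neBot, nhdsWithin_inter_of_mem' (mem_nhdsWithin_of_mem_nhds hN),
      ← mem_closure_iff_nhdsWithin_neBot]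
  have hq' := closure_mono hsub hqN
  rw [hfin.closure_biUnion] at hq'
  obtain ⟨i, -, hi⟩ := mem_iUnion₂.1 hq'
  exact hqU i hi

variable [PseudoEMetricSpace X]

theorem exists_subset_of_mem_nhds_of_tendsto_ediam {U : ι → Set X}
    (hU : Tendsto (fun i ↦ ediam (U i)) cofinite (𝓝 0)) {q : X} (hq : q ∈ closure (⋃ i, U i))
    (hqU : ∀ i, q ∉ closure (U i)) {N : Set X} (hN : N ∈ 𝓝 q) : ∃ i, U i ⊆ N := by
  obtain ⟨ε, hε, hεN⟩ := EMetric.mem_nhds_iff.1 hN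
  have hε2 : 0 < ε / 2 := ENNReal.half_pos hε.ne'
  obtain ⟨i, ⟨y, hyi, hyq⟩, hi⟩ := ((frequently_cofinite_inter_nonempty hq hqU
    (eball_mem_nhds q hε2)).and_eventually (hU.eventually_lt_const hε2)).exists
  refine ⟨i, fun z hz ↦ hεN ?_⟩
  calc edist z q ≤ edist z y + edist y q := edist_triangle z y q
    _ < ε / 2 + ε / 2 :=
        ENNReal.add_lt_add ((edist_le_ediam_of_mem hz hyi).trans_lt hi) hyq
    _ = ε := ENNReal.add_halves ε

theorem finite_setOf_le_radius_of_pairwise_disjoint_eball {c : ι → X} {r : ι → ℝ≥0∞}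
    (hc : TotallyBounded (range c)) (hdisj : Pairwise (Disjoint on fun i ↦ eball (c i) (r i)))
    {ε : ℝ≥0∞} (hε : 0 < ε) : {i | ε ≤ r i}.Finite := by
  obtain ⟨t, htfin, ht⟩ := EMetric.totallyBounded_iff.1 hc ε hε
  have hnear (i : ι) : ∃ x ∈ t, c i ∈ eball x ε := by simpa using ht (mem_range_self i)
  choose f hft hf using hnear
  refine .of_finite_image (htfin.subset (image_subset_iff.2 fun i _ ↦ hft i)) fun i hi j hj hij ↦ ?_
  refine hdisj.eq (not_disjoint_iff.2 ⟨f i, ?_, ?_⟩)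
  · exact eball_subset_eball hi (mem_eball_comm.1 (hf i))
  · exact eball_subset_eball hj (mem_eball_comm.1 (hij ▸ hf j))

theorem tendsto_ediam_eball_of_pairwise_disjoint {c : ι → X} {r : ι → ℝ≥0∞}
    (hc : TotallyBounded (range c)) (hdisj : Pairwise (Disjoint on fun i ↦ eball (c i) (r i))) :
    Tendsto (fun i ↦ ediam (eball (c i) (r i))) cofinite (𝓝 0) := by
  refine ENNReal.tendsto_nhds_zero.2 fun ε hε ↦ ?_
  have hfin := finite_setOf_le_radius_of_pairwise_disjoint_eball hc hdisj
    (ENNReal.half_pos hε.ne')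
  filter_upwards [hfin.eventually_cofinite_notMem] with i hi
  calc ediam (eball (c i) (r i)) ≤ 2 * r i := ediam_eball_le
    _ ≤ 2 * (ε / 2) := by gcongr; exact (not_le.1 hi).le
    _ = ε := ENNReal.mul_div_cancel two_ne_zero ENNReal.ofNat_ne_top

end NullFamilies

theorem locallyConnectedSpace_sphere (E : Type*) [NormedAddCommGroup E] [InnerProductSpace ℝ E]
    [FiniteDimensional ℝ E] : LocallyConnectedSpace (sphere (0 : E) 1) := by
  rcases hdim : Module.finrank ℝ E with _ | n
  · have : Subsingleton E := Module.finrank_zero_iff.1 hdim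
    infer_instance
  · have : Fact (Module.finrank ℝ E = n + 1) := ⟨hdim⟩
    exact ChartedSpace.locallyConnectedSpace (EuclideanSpace ℝ (Fin n)) _

theorem disk_in_connected_open_set_general {X ι : Type*} [PseudoEMetricSpace X]
    [LocallyCompactSpace X] [LocallyConnectedSpace X] [Countable ι] {U : ι → Set X}
    (hU : Tendsto (fun i ↦ ediam (U i)) cofinite (𝓝 0))
    (hdisj : Pairwise (Disjoint on fun i ↦ closure (U i))) (hdense : Dense (⋃ i, U i))
    {p : X} (hp : ∀ i, p ∉ closure (U i)) {V : Set X} (hVopen : IsOpen V)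
    (hVconn : IsPreconnected V) (hpV : p ∈ closure V) : ∃ j, U j ⊆ V := by
  by_contra! hcon
  have hcover : V ⊆ ⋃ i, closure (U i) := fun q hq ↦ by
    by_contra hqU
    obtain ⟨j, hj⟩ := exists_subset_of_mem_nhds_of_tendsto_ediam hU (hdense q)
      (by simpa using hqU) (hVopen.mem_nhds hq)
    exact hcon j hj
  obtain ⟨i, hi⟩ := exists_subset_of_isConnected_of_subset_iUnion_isClosed
    (fun _ ↦ isClosed_closure) hdisj hVopen ⟨closure_nonempty_iff.1 ⟨p, hpV⟩, hVconn⟩ hcover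
  exact hp i (closure_minimal hi isClosed_closure hpV)

/-- **Disk-in-connected-open-set claim.**  Given a countable family of nonempty open round disks
in `S²` with pairwise disjoint closures and dense union, a point `p` lying in the closure of
none of them, and a connected open set `V` containing `p` in its closure, some disk is
contained in `V`. -/
theorem disk_in_connected_open_set
    (U : ℕ → Set Sph) (c : ℕ → Sph) (r : ℕ → ℝ)
    (hr : ∀ i, 0 < r i) (hball : ∀ i, U i = Metric.ball (c i) (r i))
    (hne : ∀ i, (U i).Nonempty)
    (hdisj : Pairwise fun i j => Disjoint (closure (U i)) (closure (U j)))
    (hdense : Dense (⋃ i, U i))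
    (p : Sph) (hp : ∀ i, p ∉ closure (U i))
    (V : Set Sph) (hVopen : IsOpen V) (hVconn : IsConnected V) (hpV : p ∈ closure V) :
    ∃ j, U j ⊆ V := by
  have := locallyConnectedSpace_sphere (EuclideanSpace ℝ (Fin 3))
  obtain rfl : U = fun i ↦ eball (c i) (.ofReal (r i)) :=
    funext fun i ↦ (hball i).trans eball_ofReal.symm
  exact disk_in_connected_open_set_general
    (tendsto_ediam_eball_of_pairwise_disjoint (isCompact_univ.totallyBounded.subset (subset_univ _))
      (hdisj.mono fun _ _ h ↦ h.mono subset_closure subset_closure))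
    hdisj hdense hp hVopen hVconn.isPreconnected hpV
end
end
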